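/- arXiv:1511.08041 — 2 statements merged into one kernel-verified Lean document; each statement's English description precedes it below -/
import Mathlib

section
/- Let α > 0, n ≥ 1, and 1 ≤ p ≤ ∞. There exists a constant C > 0, depending only on n, α and p, such that for every t > 0: Σ_{k∈ℤⁿ} ‖I(t,·)‖_{L^p(C(k))} ≤ C ( 1 + t^{-(n/(2α))(1 - 1/p)} ). -/
open Real MeasureTheory ENNReal
open scoped Classical

/-- `I(t,x) = min(t·|x|^{-(n+2α)}, t^{-n/(2α)})`  (with the convention that at `x = 0` only the
second, finite, term is kept, since `|0|^{-(n+2α)} = +∞`). -/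
noncomputable def Ifun (n : ℕ) (α : ℝ) (t : ℝ) (x : EuclideanSpace ℝ (Fin n)) : ℝ :=
  if x = 0 then t ^ (-(n : ℝ) / (2 * α))
  else min (t * ‖x‖ ^ (-((n : ℝ) + 2 * α))) (t ^ (-(n : ℝ) / (2 * α)))

/-- The unit cube `C(k)` in `ℝⁿ` centered at `k ∈ ℤⁿ`. -/
def unitCube (n : ℕ) (k : Fin n → ℤ) : Set (EuclideanSpace ℝ (Fin n)) :=
  {x | ∀ i, |x i - (k i : ℝ)| ≤ 1 / 2}

noncomputable def phi (n : ℕ) (α : ℝ) (x : EuclideanSpace ℝ (Fin n)) : ℝ :=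
  (1 + ‖x‖) ^ (-((n : ℝ) + 2 * α))

def hcube (n : ℕ) (k : Fin n → ℤ) : Set (EuclideanSpace ℝ (Fin n)) :=
  WithLp.ofLp ⁻¹' (Set.univ.pi fun i => Set.Ico ((k i : ℝ) - 1 / 2) ((k i : ℝ) + 1 / 2))

def kv (n : ℕ) (k : Fin n → ℤ) : EuclideanSpace ℝ (Fin n) := WithLp.toLp 2 fun i => (k i : ℝ)

lemma phi_nonneg (n : ℕ) (α : ℝ) (x : EuclideanSpace ℝ (Fin n)) : 0 ≤ phi n α x := by
  unfold phi; positivity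

lemma hcube_meas (n : ℕ) (k : Fin n → ℤ) : MeasurableSet (hcube n k) := by
  apply (PiLp.volume_preserving_ofLp (Fin n)).measurable
  exact MeasurableSet.univ_pi fun i => measurableSet_Ico

lemma hcube_vol (n : ℕ) (k : Fin n → ℤ) : volume (hcube n k) = 1 := by
  unfold hcube
  rw [(PiLp.volume_preserving_ofLp (Fin n)).measure_preimage
    (MeasurableSet.univ_pi fun i => measurableSet_Ico).nullMeasurableSet, Real.volume_pi_Ico]
  apply Finset.prod_eq_one
  intro i _
  rw [show (k i : ℝ) + 1 / 2 - ((k i : ℝ) - 1 / 2) = 1 by ring, ENNReal.ofReal_one]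

lemma unitCube_eq (n : ℕ) (k : Fin n → ℤ) : unitCube n k =
  WithLp.ofLp ⁻¹' (Set.univ.pi fun i => Set.Icc ((k i : ℝ) - 1 / 2) ((k i : ℝ) + 1 / 2)) := by
  ext x
  simp only [unitCube, Set.mem_ofPred_eq, Set.mem_preimage, Set.mem_pi, Set.mem_univ, true_imp_iff,
    Set.mem_Icc, abs_le]
  refine forall_congr' fun i => ⟨fun h => ⟨by linarith [h.1], by linarith [h.2]⟩,
    fun h => ⟨by linarith [h.1], by linarith [h.2]⟩⟩

lemma unitCube_meas (n : ℕ) (k : Fin n → ℤ) : MeasurableSet (unitCube n k) := by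
  rw [unitCube_eq]
  apply (PiLp.volume_preserving_ofLp (Fin n)).measurable
  exact MeasurableSet.univ_pi fun i => measurableSet_Icc

lemma unitCube_vol (n : ℕ) (k : Fin n → ℤ) : volume (unitCube n k) = 1 := by
  rw [unitCube_eq, (PiLp.volume_preserving_ofLp (Fin n)).measure_preimage
    (MeasurableSet.univ_pi fun i => measurableSet_Icc).nullMeasurableSet, volume_pi_pi]
  apply Finset.prod_eq_one
  intro i _
  rw [Real.volume_Icc, show (k i : ℝ) + 1 / 2 - ((k i : ℝ) - 1 / 2) = 1 by ring, ENNReal.ofReal_one]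

lemma hcube_sub (n : ℕ) (k : Fin n → ℤ) : hcube n k ⊆ unitCube n k := by
  rw [unitCube_eq]
  exact Set.preimage_mono (Set.pi_mono fun i _ => Set.Ico_subset_Icc_self)

lemma hcube_disj (n : ℕ) : Pairwise (Function.onFun Disjoint (hcube n)) := by
  intro k l hkl
  rw [Function.onFun, Set.disjoint_left]
  intro x hx hy
  apply hkl
  funext i
  have h1 := hx i (Set.mem_univ i)
  have h2 := hy i (Set.mem_univ i)
  simp only [Set.mem_Ico] at h1 h2
  have h3 : (k i : ℝ) < (l i : ℝ) + 1 := by linarith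
  have h4 : (l i : ℝ) < (k i : ℝ) + 1 := by linarith
  have h3' : k i < l i + 1 := by exact_mod_cast h3
  have h4' : l i < k i + 1 := by exact_mod_cast h4
  omega

lemma unitCube_dist (n : ℕ) (k : Fin n → ℤ) (x : EuclideanSpace ℝ (Fin n))
    (hx : x ∈ unitCube n k) : ‖x - kv n k‖ ≤ n := by
  rw [EuclideanSpace.norm_eq]
  apply Real.sqrt_le_iff.2
  refine ⟨by positivity, ?_⟩
  calc ∑ i, ‖(x - kv n k) i‖ ^ 2 ≤ ∑ i : Fin n, (1 : ℝ) := by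
        apply Finset.sum_le_sum
        intro i _
        have : |x i - (k i : ℝ)| ≤ 1 / 2 := hx i
        simp only [kv, PiLp.sub_apply, Real.norm_eq_abs]
        nlinarith [abs_nonneg (x i - (k i : ℝ))]
    _ = n := by simp
    _ ≤ (n : ℝ) ^ 2 := by
        rcases Nat.eq_zero_or_pos n with h | h
        · simp [h]
        · have : (1 : ℝ) ≤ n := by exact_mod_cast h
          nlinarith

lemma phi_comp (n : ℕ) (α : ℝ) (hα : 0 < α) (r : ℝ) (hr : 1 ≤ r)
    (x y : EuclideanSpace ℝ (Fin n)) (h : ‖x - y‖ ≤ n) :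
    phi n α (r⁻¹ • x) ≤ (1 + n : ℝ) ^ ((n : ℝ) + 2 * α) * phi n α (r⁻¹ • y) := by
  unfold phi
  have hri : r⁻¹ ≤ 1 := inv_le_one_of_one_le₀ hr
  have hri0 : 0 < r⁻¹ := by positivity
  have h1 : ‖r⁻¹ • y‖ ≤ ‖r⁻¹ • x‖ + n := by
    simp only [norm_smul, Real.norm_eq_abs, abs_of_pos hri0]
    have : ‖y‖ ≤ ‖x‖ + ‖x - y‖ := by
      have := norm_sub_norm_le y x
      rw [norm_sub_rev] at this; linarith
    have h2 : r⁻¹ * ‖x - y‖ ≤ 1 * n := by gcongr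
    nlinarith
  have h3 : 1 + ‖r⁻¹ • y‖ ≤ (1 + n) * (1 + ‖r⁻¹ • x‖) := by
    nlinarith [norm_nonneg (r⁻¹ • x), mul_nonneg (Nat.cast_nonneg (α := ℝ) n) (norm_nonneg (r⁻¹ • x))]
  have h4 : ((1 + n) * (1 + ‖r⁻¹ • x‖)) ^ (-((n : ℝ) + 2 * α)) ≤
      (1 + ‖r⁻¹ • y‖) ^ (-((n : ℝ) + 2 * α)) :=
    Real.rpow_le_rpow_of_nonpos (by positivity) h3 (by
      have : (0 : ℝ) ≤ n := Nat.cast_nonneg n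
      linarith)
  rw [Real.mul_rpow (by positivity) (by positivity)] at h4
  calc _ = (1 + n : ℝ) ^ ((n : ℝ) + 2 * α) * ((1 + n : ℝ) ^ (-((n : ℝ) + 2 * α)) * 
        (1 + ‖r⁻¹ • x‖) ^ (-((n : ℝ) + 2 * α))) := by
        rw [← mul_assoc, ← Real.rpow_add (by positivity)]
        simp
    _ ≤ _ := by gcongr

lemma phi_integrable (n : ℕ) (α : ℝ) (hα : 0 < α) : Integrable (phi n α) := by
  apply integrable_one_add_norm
  simp; linarith

lemma phi_lint (n : ℕ) (α : ℝ) (hα : 0 < α) (r : ℝ) (hr : 0 < r) (c : ℝ) (hc : 0 ≤ c) :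
    ∫⁻ x, ENNReal.ofReal (c * phi n α (r⁻¹ • x)) =
      ENNReal.ofReal (c * (r ^ (n : ℝ) * ∫ x, phi n α x)) := by
  rw [← ofReal_integral_eq_lintegral_ofReal]
  · rw [integral_const_mul, Measure.integral_comp_smul]
    simp only [finrank_euclideanSpace, Fintype.card_fin, smul_eq_mul, Real.rpow_natCast]
    congr 3
    rw [inv_pow, inv_inv, abs_of_pos (by positivity)]
  · exact ((phi_integrable n α hα).comp_smul (inv_ne_zero hr.ne')).const_mul c
  · exact Filter.Eventually.of_forall fun x => mul_nonneg hc (phi_nonneg _ _ _)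

lemma sum_phi (n : ℕ) (α : ℝ) (hα : 0 < α) (r : ℝ) (hr : 1 ≤ r) (c : ℝ) (hc : 0 ≤ c) :
    ∑' k : Fin n → ℤ, ENNReal.ofReal (c * phi n α (r⁻¹ • kv n k)) ≤
      ENNReal.ofReal (c * (1 + n : ℝ) ^ ((n : ℝ) + 2 * α) * (r ^ (n : ℝ) * ∫ x, phi n α x)) := by
  rw [← phi_lint n α hα r (by linarith) _ (by positivity)]
  calc _ ≤ ∑' k : Fin n → ℤ, ∫⁻ x in hcube n k,
        ENNReal.ofReal (c * (1 + n : ℝ) ^ ((n : ℝ) + 2 * α) * phi n α (r⁻¹ • x)) := by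
        apply ENNReal.tsum_le_tsum
        intro k
        calc _ = ∫⁻ x in hcube n k, ENNReal.ofReal (c * phi n α (r⁻¹ • kv n k)) := by
              rw [setLIntegral_const, hcube_vol, mul_one]
          _ ≤ _ := by
              apply setLIntegral_mono' (hcube_meas n k)
              intro x hx
              apply ENNReal.ofReal_le_ofReal
              rw [mul_assoc]
              apply mul_le_mul_of_nonneg_left _ hc
              apply phi_comp n α hα r hr
              rw [norm_sub_rev]
              exact unitCube_dist n k x (hcube_sub n k hx)
    _ = ∫⁻ x in ⋃ k, hcube n k,
        ENNReal.ofReal (c * (1 + n : ℝ) ^ ((n : ℝ) + 2 * α) * phi n α (r⁻¹ • x)) :=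
        (lintegral_iUnion (hcube_meas n) (hcube_disj n) _).symm
    _ ≤ _ := setLIntegral_le_lintegral _ _

lemma Ifun_nonneg (n : ℕ) (α t : ℝ) (ht : 0 < t) (x : EuclideanSpace ℝ (Fin n)) :
    0 ≤ Ifun n α t x := by
  unfold Ifun; split_ifs <;> positivity

lemma Ifun_le_A (n : ℕ) (α t : ℝ) (x : EuclideanSpace ℝ (Fin n)) :
    Ifun n α t x ≤ t ^ (-(n : ℝ) / (2 * α)) := by
  unfold Ifun; split_ifs
  · exact le_rfl
  · exact min_le_right _ _

lemma Ifun_le_phi (n : ℕ) (α t : ℝ) (hα : 0 < α) (ht : 0 < t) (r : ℝ) (hr : r = t ^ (1 / (2 * α)))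
    (x : EuclideanSpace ℝ (Fin n)) :
    Ifun n α t x ≤ (2 : ℝ) ^ ((n : ℝ) + 2 * α) * r ^ (-(n : ℝ)) * phi n α (r⁻¹ • x) := by
  have hr0 : 0 < r := by rw [hr]; positivity
  have hA : t ^ (-(n : ℝ) / (2 * α)) = r ^ (-(n : ℝ)) := by
    rw [hr, ← Real.rpow_mul ht.le]; congr 1; ring
  have hT : t = r ^ (2 * α) := by
    rw [hr, ← Real.rpow_mul ht.le, one_div_mul_cancel (by positivity), Real.rpow_one]
  have hb : -((n : ℝ) + 2 * α) ≤ 0 := by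
    have : (0 : ℝ) ≤ n := Nat.cast_nonneg n
    linarith
  have hn : ‖r⁻¹ • x‖ = ‖x‖ / r := by
    rw [norm_smul, Real.norm_eq_abs, abs_of_pos (by positivity)]; ring
  have h2 : (2 : ℝ) ^ ((n : ℝ) + 2 * α) * 2 ^ (-((n : ℝ) + 2 * α)) = 1 := by
    rw [← Real.rpow_add (by positivity)]; simp
  unfold phi
  rw [hn]
  rcases le_or_gt ‖x‖ r with h | h
  · have h1 : ‖x‖ / r ≤ 1 := (div_le_one hr0).2 h
    have h3 := Real.rpow_le_rpow_of_nonpos (by positivity : 0 < 1 + ‖x‖ / r)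
      (by linarith : 1 + ‖x‖ / r ≤ 2) hb
    calc _ ≤ r ^ (-(n : ℝ)) := hA ▸ Ifun_le_A n α t x
      _ = (2 : ℝ) ^ ((n : ℝ) + 2 * α) * r ^ (-(n : ℝ)) * 2 ^ (-((n : ℝ) + 2 * α)) := by
        rw [mul_right_comm, h2, one_mul]
      _ ≤ _ := by gcongr
  · have hx0 : 0 < ‖x‖ := hr0.trans h
    have h1 : 1 ≤ ‖x‖ / r := (one_le_div hr0).2 h.le
    have h3 := Real.rpow_le_rpow_of_nonpos (by positivity : 0 < 1 + ‖x‖ / r)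
      (by linarith : 1 + ‖x‖ / r ≤ 2 * (‖x‖ / r)) hb
    calc _ ≤ t * ‖x‖ ^ (-((n : ℝ) + 2 * α)) := by
          unfold Ifun; rw [if_neg (norm_pos_iff.1 hx0)]; exact min_le_left _ _
      _ = (2 : ℝ) ^ ((n : ℝ) + 2 * α) * r ^ (-(n : ℝ)) * (2 * (‖x‖ / r)) ^ (-((n : ℝ) + 2 * α)) := by
        rw [Real.mul_rpow (by positivity) (by positivity), Real.div_rpow (by positivity) hr0.le]
        have : t = r ^ (-(n : ℝ)) / r ^ (-((n : ℝ) + 2 * α)) := by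
          rw [← Real.rpow_sub hr0]; nth_rewrite 1 [hT]; congr 1; ring
        nth_rewrite 1 [this]
        calc _ = ((2 : ℝ) ^ ((n : ℝ) + 2 * α) * 2 ^ (-((n : ℝ) + 2 * α))) * 
            (r ^ (-(n : ℝ)) / r ^ (-((n : ℝ) + 2 * α)) * ‖x‖ ^ (-((n : ℝ) + 2 * α))) := by
              rw [h2, one_mul]
          _ = _ := by ring
      _ ≤ _ := by gcongr

lemma eLp_le (n : ℕ) (k : Fin n → ℤ) (p : ℝ≥0∞) (f : EuclideanSpace ℝ (Fin n) → ℝ) (c : ℝ)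
    (h : ∀ x ∈ unitCube n k, ‖f x‖ ≤ c) :
    eLpNorm f p (volume.restrict (unitCube n k)) ≤ ENNReal.ofReal c := by
  have := eLpNorm_le_of_ae_bound (p := p) (μ := volume.restrict (unitCube n k)) (f := f) (C := c)
    (ae_restrict_of_forall_mem (unitCube_meas n k) h)
  simpa [unitCube_vol] using this

lemma far_bound (n : ℕ) (α t : ℝ) (hα : 0 < α) (ht : 0 < t) (ht1 : t ≤ 1)
    (k : Fin n → ℤ) (hk : k ≠ 0) (x : EuclideanSpace ℝ (Fin n)) (hx : x ∈ unitCube n k) :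
    Ifun n α t x ≤ (3 : ℝ) ^ ((n : ℝ) + 2 * α) * phi n α x := by
  obtain ⟨i, hi⟩ := Function.ne_iff.1 hk
  have h1 : (1 : ℝ) ≤ |(k i : ℝ)| := by
    have : (1 : ℤ) ≤ |k i| := Int.one_le_abs hi
    exact_mod_cast this
  have h2 : |x i - (k i : ℝ)| ≤ 1 / 2 := hx i
  have h3 : |x i| ≤ ‖x‖ := by simpa using PiLp.norm_apply_le x i
  have h4 : 1 / 2 ≤ ‖x‖ := by
    have := abs_sub_abs_le_abs_sub (k i : ℝ) (x i)
    rw [abs_sub_comm] at this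
    linarith
  have hx0 : 0 < ‖x‖ := by linarith
  have hb : -((n : ℝ) + 2 * α) ≤ 0 := by
    have : (0 : ℝ) ≤ n := Nat.cast_nonneg n
    linarith
  have h5 := Real.rpow_le_rpow_of_nonpos (by positivity : 0 < 1 + ‖x‖)
      (by linarith : 1 + ‖x‖ ≤ 3 * ‖x‖) hb
  have h6 : (3 : ℝ) ^ ((n : ℝ) + 2 * α) * 3 ^ (-((n : ℝ) + 2 * α)) = 1 := by
    rw [← Real.rpow_add (by positivity)]; simp
  unfold phi
  calc _ ≤ t * ‖x‖ ^ (-((n : ℝ) + 2 * α)) := by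
          unfold Ifun; rw [if_neg (norm_pos_iff.1 hx0)]; exact min_le_left _ _
    _ ≤ 1 * ‖x‖ ^ (-((n : ℝ) + 2 * α)) := by gcongr
    _ = (3 : ℝ) ^ ((n : ℝ) + 2 * α) * (3 * ‖x‖) ^ (-((n : ℝ) + 2 * α)) := by
        rw [Real.mul_rpow (by positivity) (by positivity), ← mul_assoc, h6]
    _ ≤ _ := by gcongr

lemma near_bound (n : ℕ) (α : ℝ) (hα : 0 < α) (p : ℝ≥0∞) (hp : 1 ≤ p) (t : ℝ) (ht : 0 < t) 
    (k : Fin n → ℤ) :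
    eLpNorm (fun x => Ifun n α t x) p (volume.restrict (unitCube n k)) ≤
      ENNReal.ofReal (((2 : ℝ) ^ ((n : ℝ) + 2 * α) * ∫ x, phi n α x) ^ (1 / p.toReal) *
        t ^ (-((n : ℝ) / (2 * α)) * (1 - 1 / p.toReal))) := by
  by_cases hpt : p = ⊤
  · subst hpt
    simp only [ENNReal.toReal_top, _root_.div_zero, Real.rpow_zero, one_mul, _root_.sub_zero, mul_one]
    apply eLp_le
    intro x _
    rw [Real.norm_of_nonneg (Ifun_nonneg n α t ht x), ← neg_div]
    exact Ifun_le_A n α t x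
  have hp0 : p ≠ 0 := by rintro rfl; simp at hp
  have hq : 1 ≤ p.toReal := by
    rw [← ENNReal.toReal_one]; exact ENNReal.toReal_mono hpt hp
  set q := p.toReal
  set M := (2 : ℝ) ^ ((n : ℝ) + 2 * α) * ∫ x, phi n α x with hM
  have hM0 : 0 ≤ M := mul_nonneg (by positivity) (integral_nonneg (phi_nonneg n α))
  obtain ⟨r, hr⟩ : ∃ r, r = t ^ (1 / (2 * α)) := ⟨_, rfl⟩
  have hr0 : 0 < r := by rw [hr]; positivity
  set A := t ^ (-(n : ℝ) / (2 * α)) with hA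
  have hA0 : 0 < A := by positivity
  rw [eLpNorm_eq_lintegral_rpow_enorm_toReal hp0 hpt]
  calc _ ≤ (∫⁻ x, ENNReal.ofReal (A ^ (q - 1) * 
        ((2 : ℝ) ^ ((n : ℝ) + 2 * α) * r ^ (-(n : ℝ))) * phi n α (r⁻¹ • x))) ^ (1 / q) := by
        apply ENNReal.rpow_le_rpow _ (by positivity)
        refine (setLIntegral_le_lintegral _ _).trans (lintegral_mono fun x => ?_)
        have h0 := Ifun_nonneg n α t ht x
        rw [Real.enorm_of_nonneg h0, ENNReal.ofReal_rpow_of_nonneg h0 (by linarith)]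
        apply ENNReal.ofReal_le_ofReal
        rw [mul_assoc]
        calc Ifun n α t x ^ q = Ifun n α t x ^ (q - 1) * Ifun n α t x := by
              rcases h0.eq_or_lt with h | h
              · rw [← h, Real.zero_rpow (by linarith), mul_zero]
              · nth_rewrite 3 [← Real.rpow_one (Ifun n α t x)]
                rw [← Real.rpow_add h]; simp
          _ ≤ _ := mul_le_mul (Real.rpow_le_rpow h0 (Ifun_le_A n α t x) (by linarith))
              (Ifun_le_phi n α t hα ht r hr x) h0 (by positivity)
    _ = ENNReal.ofReal ((A ^ (q - 1) * M) ^ (1 / q)) := by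
        rw [phi_lint n α hα r hr0 _ (by positivity), ENNReal.ofReal_rpow_of_nonneg _ (by positivity)]
        · congr 2
          have : r ^ (-(n : ℝ)) * r ^ (n : ℝ) = 1 := by rw [← Real.rpow_add hr0]; simp
          rw [hM]
          linear_combination A ^ (q - 1) * (2 : ℝ) ^ ((n : ℝ) + 2 * α) * (∫ x, phi n α x) * this
        · exact mul_nonneg (by positivity) (mul_nonneg (by positivity) (integral_nonneg (phi_nonneg n α)))
    _ = _ := by
        congr 1
        rw [Real.mul_rpow (by positivity) hM0, mul_comm, hA, ← Real.rpow_mul ht.le,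
          ← Real.rpow_mul ht.le]
        congr 2
        have : q ≠ 0 := by linarith
        field_simp

lemma enn_bound (n : ℕ) (α : ℝ) (hα : 0 < α) (p : ℝ≥0∞) (hp : 1 ≤ p) :
    ∃ C > (0 : ℝ), ∀ t : ℝ, 0 < t →
      ∑' k : Fin n → ℤ, eLpNorm (fun x => Ifun n α t x) p (volume.restrict (unitCube n k)) ≤
        ENNReal.ofReal (C * (1 + t ^ (-((n : ℝ) / (2 * α)) * (1 - 1 / p.toReal)))) := by
  obtain ⟨J, hJ⟩ : ∃ J, J = ∫ x, phi n α x := ⟨_, rfl⟩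
  have hJ0 : 0 ≤ J := hJ ▸ integral_nonneg (phi_nonneg n α)
  obtain ⟨K, hK⟩ : ∃ K, K = (1 + n : ℝ) ^ ((n : ℝ) + 2 * α) := ⟨_, rfl⟩
  have hK0 : 0 ≤ K := by rw [hK]; positivity
  obtain ⟨M, hM⟩ : ∃ M, M = ((2 : ℝ) ^ ((n : ℝ) + 2 * α) * J) ^ (1 / p.toReal) := ⟨_, rfl⟩
  have hM0 : 0 ≤ M := by rw [hM]; positivity
  obtain ⟨c2, hc2⟩ : ∃ M, M = (2 : ℝ) ^ ((n : ℝ) + 2 * α) := ⟨_, rfl⟩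
  have hc20 : 0 ≤ c2 := by rw [hc2]; positivity
  obtain ⟨c3, hc3⟩ : ∃ M, M = (3 : ℝ) ^ ((n : ℝ) + 2 * α) := ⟨_, rfl⟩
  have hc30 : 0 ≤ c3 := by rw [hc3]; positivity
  refine ⟨c2 * K * K * J + c3 * K * K * J + M + 1, by positivity, fun t ht => ?_⟩
  obtain ⟨T, hT⟩ : ∃ T, T = t ^ (-((n : ℝ) / (2 * α)) * (1 - 1 / p.toReal)) := ⟨_, rfl⟩
  have hT0 : 0 ≤ T := by rw [hT]; positivity
  rw [← hT]
  have e1 : 0 ≤ c2 * K * K * J := by positivity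
  have e2 : 0 ≤ c3 * K * K * J := by positivity
  rcases le_total 1 t with h1 | h1
  · obtain ⟨r, hr⟩ : ∃ r, r = t ^ (1 / (2 * α)) := ⟨_, rfl⟩
    have hr1 : 1 ≤ r := by rw [hr]; exact Real.one_le_rpow h1 (by positivity)
    have hr0 : 0 < r := by linarith
    calc _ ≤ ∑' k : Fin n → ℤ, ENNReal.ofReal (c2 * r ^ (-(n : ℝ)) * K * phi n α (r⁻¹ • kv n k)) := by
          apply ENNReal.tsum_le_tsum
          intro k
          apply eLp_le
          intro x hx
          rw [Real.norm_of_nonneg (Ifun_nonneg n α t ht x)]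
          refine (Ifun_le_phi n α t hα ht r hr x).trans ?_
          rw [← hc2, mul_assoc _ K]
          apply mul_le_mul_of_nonneg_left _ (by positivity)
          rw [hK]
          exact phi_comp n α hα r hr1 _ _ (unitCube_dist n k x hx)
      _ ≤ _ := sum_phi n α hα r hr1 _ (by positivity)
      _ ≤ _ := by
          apply ENNReal.ofReal_le_ofReal
          rw [← hK, ← hJ]
          have : r ^ (-(n : ℝ)) * r ^ (n : ℝ) = 1 := by rw [← Real.rpow_add hr0]; simp
          calc _ = c2 * K * K * J := by linear_combination c2 * K * K * J * this
            _ ≤ _ := by nlinarith [mul_nonneg e1 hT0, mul_nonneg e2 hT0, mul_nonneg hM0 hT0]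
  · calc _ ≤ ∑' k : Fin n → ℤ, (ENNReal.ofReal (c3 * K * phi n α ((1 : ℝ)⁻¹ • kv n k)) +
            if k = 0 then ENNReal.ofReal (M * T) else 0) := by
          apply ENNReal.tsum_le_tsum
          intro k
          by_cases hk : k = 0
          · rw [if_pos hk]
            refine le_trans ?_ le_add_self
            rw [hM, hT, hJ]
            exact near_bound n α hα p hp t ht k
          · rw [if_neg hk, add_zero]
            apply eLp_le
            intro x hx
            rw [Real.norm_of_nonneg (Ifun_nonneg n α t ht x)]
            refine (far_bound n α t hα ht h1 k hk x hx).trans ?_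
            rw [← hc3, mul_assoc _ K]
            apply mul_le_mul_of_nonneg_left _ (by positivity)
            rw [hK]
            have := phi_comp n α hα 1 le_rfl _ _ (unitCube_dist n k x hx)
            simpa only [_root_.inv_one, one_smul] using this
      _ = ∑' k : Fin n → ℤ, (ENNReal.ofReal (c3 * K * phi n α ((1 : ℝ)⁻¹ • kv n k))) +
            ENNReal.ofReal (M * T) := by
          rw [ENNReal.tsum_add, tsum_ite_eq]
      _ ≤ ENNReal.ofReal (c3 * K * K * (1 ^ (n : ℝ) * J)) + ENNReal.ofReal (M * T) := by
          gcongr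
          rw [hJ]
          nth_rewrite 3 [hK]
          exact sum_phi n α hα 1 le_rfl _ (by positivity)
      _ ≤ _ := by
          rw [← ENNReal.ofReal_add (by positivity) (by positivity)]
          apply ENNReal.ofReal_le_ofReal
          rw [Real.one_rpow, one_mul]
          nlinarith [mul_nonneg e1 hT0, mul_nonneg e2 hT0, mul_nonneg hM0 hT0]

/-- for `1 ≤ p ≤ ∞` there is `C > 0`, depending only on `n`, `α` and `p`, such
that for every `t > 0`, `Σ_{k∈ℤⁿ} ‖I(t,·)‖_{L^p(C(k))} ≤ C (1 + t^{-(n/(2α))(1-1/p)})`.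
(When `p = ∞`, `1 - 1/p.toReal = 1` by the Lean conventions `(∞).toReal = 0`, `1/0 = 0`.) -/
theorem Ifun_amalgam_bound (n : ℕ) (hn : 1 ≤ n) (α : ℝ) (hα : 0 < α)
    (p : ℝ≥0∞) (hp : 1 ≤ p) :
    ∃ C > (0 : ℝ), ∀ t : ℝ, 0 < t →
      Summable (fun k : Fin n → ℤ =>
        (eLpNorm (fun x => Ifun n α t x) p (volume.restrict (unitCube n k))).toReal) ∧
      ∑' k : Fin n → ℤ,
          (eLpNorm (fun x => Ifun n α t x) p (volume.restrict (unitCube n k))).toReal ≤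
        C * (1 + t ^ (-((n : ℝ) / (2 * α)) * (1 - 1 / p.toReal))) := by
  obtain ⟨C, hC, h⟩ := enn_bound n α hα p hp
  refine ⟨C, hC, fun t ht => ?_⟩
  have h1 := h t ht
  have h2 := ne_top_of_le_ne_top ENNReal.ofReal_ne_top h1
  refine ⟨ENNReal.summable_toReal h2, ?_⟩
  rw [← ENNReal.tsum_toReal_eq (ENNReal.ne_top_of_tsum_ne_top h2)]
  exact ENNReal.toReal_le_of_le_ofReal (by positivity) h1
end

section
/- Let m be a positive integer, M ∈ ℝ, and let g be a smooth compactly supported function on ℝ with support contained in (0,∞). For t ∈ ℝ define g_t(μ) = e^{i t (M - 1/μ)} g(μ) for μ ≠ 0, extended by 0. Then for every β with 0 ≤ β < m - 1/2 there exists a constant C > 0, depending on g, m, β and M, such that for all t ∈ ℝ: ∫_ℝ |ĝ_t(s)| (1 + s²)^{β/2} ds ≤ C (1 + t²)^{m/2}, where ĝ_t denotes the Fourier transform of g_t. -/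
open Real MeasureTheory

/-- `g_t(μ) = e^{it(M - 1/μ)} g(μ)` (for `μ ≠ 0`, extended by `0`; since `supp g ⊆ (0,∞)` and
`1/0 = 0` in Lean, the formula below realizes exactly this extension). -/
noncomputable def gtfun (M : ℝ) (g : ℝ → ℂ) (t : ℝ) (μ : ℝ) : ℂ :=
  Complex.exp (Complex.I * (t : ℂ) * ((M : ℂ) - 1 / (μ : ℂ))) * g μ

/-- The Fourier transform `ĝ_t(s) = ∫_ℝ e^{-i s μ} g_t(μ) dμ`. -/
noncomputable def gtHat (M : ℝ) (g : ℝ → ℂ) (t : ℝ) (s : ℝ) : ℂ :=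
  ∫ μ : ℝ, Complex.exp (-(Complex.I * (s : ℂ) * (μ : ℂ))) * gtfun M g t μ

open scoped FourierTransform SchwartzMap

/-- admissible amplitudes -/
structure Adm (g : ℝ → ℂ) : Prop where
  smooth : ContDiff ℝ (⊤ : ℕ∞) g
  cpt : HasCompactSupport g
  pos : tsupport g ⊆ Set.Ioi 0

lemma Adm.derivative {g : ℝ → ℂ} (h : Adm g) : Adm (deriv g) where
  smooth := by
    have := h.smooth
    exact (contDiff_infty_iff_deriv.1 this).2
  cpt := h.cpt.deriv
  pos := (tsupport_deriv_subset).trans h.pos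

lemma Adm.mulLeft {g : ℝ → ℂ} (h : Adm g) {f : ℝ → ℂ}
    (hf : ∀ x : ℝ, 0 < x → ContDiffAt ℝ (⊤ : ℕ∞) f x) : Adm (fun x => f x * g x) where
  smooth := by
    rw [contDiff_iff_contDiffAt]
    intro x
    by_cases hx' : x ∈ tsupport g
    swap
    · have h0 : (fun x => f x * g x) =ᶠ[nhds x] fun _ => 0 := by
        filter_upwards [notMem_tsupport_iff_eventuallyEq.1 hx'] with y hy
        simp [hy]
      exact contDiffAt_const.congr_of_eventuallyEq h0
    exact (hf x (h.pos hx')).mul h.smooth.contDiffAt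
  cpt := h.cpt.mul_left
  pos := (tsupport_mul_subset_right (f := f) (g := g)).trans h.pos

lemma contDiffAt_ofReal (x : ℝ) : ContDiffAt ℝ (⊤ : ℕ∞) (fun y : ℝ => (y : ℂ)) x :=
  Complex.ofRealCLM.contDiff.contDiffAt

lemma Adm.divSq {g : ℝ → ℂ} (h : Adm g) : Adm (fun x => ((x : ℂ) ^ 2)⁻¹ * g x) := by
  apply h.mulLeft
  intro x hx
  apply ContDiffAt.inv
  · exact (contDiffAt_ofReal x).pow 2
  · have : (x : ℂ) ≠ 0 := by exact_mod_cast hx.ne'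
    positivity

lemma Adm.gt {g : ℝ → ℂ} (h : Adm g) (M t : ℝ) : Adm (gtfun M g t) := by
  apply h.mulLeft
  intro x hx
  have hx0 : (x : ℂ) ≠ 0 := by exact_mod_cast hx.ne'
  apply ContDiffAt.cexp
  apply contDiffAt_const.mul
  apply contDiffAt_const.sub
  simp only [one_div]
  exact (contDiffAt_ofReal x).inv hx0

lemma Adm.integrable {g : ℝ → ℂ} (h : Adm g) : Integrable g :=
  h.smooth.continuous.integrable_of_hasCompactSupport h.cpt

lemma norm_gtfun (M : ℝ) (g : ℝ → ℂ) (t μ : ℝ) : ‖gtfun M g t μ‖ = ‖g μ‖ := by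
  have : Complex.I * (t : ℂ) * ((M : ℂ) - 1 / (μ : ℂ)) = ((t * (M - 1 / μ) : ℝ) : ℂ) * Complex.I := by
    push_cast; ring
  rw [gtfun, norm_mul, this, Complex.norm_exp_ofReal_mul_I, one_mul]

lemma gtHat_eq (M : ℝ) (g : ℝ → ℂ) (t s : ℝ) :
    gtHat M g t s = 𝓕 (gtfun M g t) (s / (2 * π)) := by
  rw [Real.fourier_real_eq_integral_exp_smul, gtHat]
  congr 1
  ext μ
  rw [smul_eq_mul]
  congr 2
  have : (π : ℂ) ≠ 0 := by exact_mod_cast Real.pi_ne_zero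
  push_cast
  field_simp

lemma deriv_gtfun {g : ℝ → ℂ} (h : Adm g) (M t : ℝ) :
    deriv (gtfun M g t) = fun μ => gtfun M (deriv g) t μ +
      (Complex.I * t) * gtfun M (fun x => ((x : ℂ) ^ 2)⁻¹ * g x) t μ := by
  ext μ
  by_cases hμ : μ ∈ tsupport g
  · have h0 : 0 < μ := h.pos hμ
    have hx0 : (μ : ℂ) ≠ 0 := by exact_mod_cast h0.ne'
    have h1 : HasDerivAt (fun x : ℝ => (x : ℂ)) 1 μ := Complex.ofRealCLM.hasDerivAt
    have h2 := ((((hasDerivAt_const μ (1 : ℂ)).div h1 hx0).const_sub (M : ℂ)).const_mul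
      (Complex.I * (t : ℂ))).cexp
    have h3 : HasDerivAt g (deriv g μ) μ :=
      (h.smooth.differentiable (by simp)).differentiableAt.hasDerivAt
    have h4 := (h2.mul h3).deriv
    have h5 : deriv (gtfun M g t) μ = _ := h4
    rw [h5]
    simp only [gtfun, Pi.div_apply]
    field_simp
    ring
  · have hz : g μ = 0 := image_eq_zero_of_notMem_tsupport hμ
    have hz' : deriv g μ = 0 := by
      by_contra hne
      exact hμ (support_deriv_subset hne)
    have hz2 : deriv (gtfun M g t) μ = 0 := by
      by_contra hne
      have := support_deriv_subset hne
      exact hμ (tsupport_mul_subset_right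
        (f := fun μ : ℝ => Complex.exp (Complex.I * (t : ℂ) * ((M : ℂ) - 1 / (μ : ℂ)))) (g := g) this)
    rw [hz2]
    simp [gtfun, hz, hz']

lemma gtHat_rec {g : ℝ → ℂ} (h : Adm g) (M t s : ℝ) :
    (Complex.I * s) * gtHat M g t s = gtHat M (deriv g) t s +
      (Complex.I * t) * gtHat M (fun x => ((x : ℂ) ^ 2)⁻¹ * g x) t s := by
  have hA := h.gt M t
  have e := congrFun (Real.fourier_deriv hA.integrable (hA.smooth.differentiable (by simp))
    hA.derivative.integrable) (s / (2 * π))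
  have e2 : (2 * π * Complex.I * ((s / (2 * π) : ℝ) : ℂ)) = Complex.I * s := by
    have : (π : ℂ) ≠ 0 := by exact_mod_cast Real.pi_ne_zero
    push_cast
    field_simp
  rw [e2, smul_eq_mul, ← gtHat_eq] at e
  rw [← e, deriv_gtfun h]
  have hs : ∀ f : ℝ → ℂ, 𝓕 f (s / (2 * π)) = ∫ μ : ℝ, Complex.exp (-(Complex.I * (s : ℂ) * (μ : ℂ))) * f μ := by
    intro f
    rw [Real.fourier_real_eq_integral_exp_smul]
    congr 1
    ext μ
    rw [smul_eq_mul]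
    congr 2
    have : (π : ℂ) ≠ 0 := by exact_mod_cast Real.pi_ne_zero
    push_cast
    field_simp
  rw [hs, gtHat, gtHat, ← integral_const_mul, ← integral_add]
  · congr 1
    ext μ
    ring
  · exact (h.derivative.gt M t).mulLeft (f := fun μ : ℝ => Complex.exp (-(Complex.I * (s : ℂ) * (μ : ℂ))))
      (fun x _ => (contDiffAt_const.mul (contDiffAt_ofReal x)).neg.cexp) |>.integrable
  · exact ((h.divSq.gt M t).mulLeft (f := fun μ : ℝ => Complex.exp (-(Complex.I * (s : ℂ) * (μ : ℂ))))
      (fun x _ => (contDiffAt_const.mul (contDiffAt_ofReal x)).neg.cexp) |>.integrable).const_mul _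

lemma gtHat_base {g : ℝ → ℂ} (h : Adm g) (M t : ℝ) :
    Continuous (gtHat M g t) ∧ Integrable (fun s => ‖gtHat M g t s‖ ^ 2) ∧
      ∫ s, ‖gtHat M g t s‖ ^ 2 = 2 * π * ∫ μ, ‖g μ‖ ^ 2 := by
  have hA := h.gt M t
  let F : 𝓢(ℝ, ℂ) := hA.cpt.toSchwartzMap hA.smooth
  have hF : ∀ s, gtHat M g t s = (𝓕 F) (s / (2 * π)) := by
    intro s
    rw [gtHat_eq, SchwartzMap.fourier_coe]
    rfl
  have hF' : gtHat M g t = fun s => (𝓕 F) (s / (2 * π)) := funext hF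
  have hpi : (2 * π) ≠ 0 := by positivity
  refine ⟨?_, ?_, ?_⟩
  · rw [hF']
    exact (𝓕 F).continuous.comp (by fun_prop)
  · simp_rw [hF]
    have : Integrable (fun y => ‖(𝓕 F) y‖ ^ 2) :=
      ((𝓕 F).memLp 2 volume).integrable_norm_pow (by norm_num)
    exact this.comp_div hpi
  · simp_rw [hF]
    rw [Measure.integral_comp_div (fun y : ℝ => ‖(𝓕 F : 𝓢(ℝ, ℂ)) y‖ ^ 2), SchwartzMap.integral_norm_sq_fourier,
      abs_of_pos (by positivity), smul_eq_mul]
    congr 2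
    ext μ
    congr 1
    exact norm_gtfun M g t μ

lemma weighted_L2 (M : ℝ) (k : ℕ) : ∀ g : ℝ → ℂ, Adm g → ∃ C : ℝ, 0 ≤ C ∧ ∀ t : ℝ,
    Integrable (fun s : ℝ => (1 + s ^ 2) ^ k * ‖gtHat M g t s‖ ^ 2) ∧
    ∫ s : ℝ, (1 + s ^ 2) ^ k * ‖gtHat M g t s‖ ^ 2 ≤ C * (1 + t ^ 2) ^ k := by
  induction k with
  | zero =>
    intro g h
    refine ⟨2 * π * ∫ μ, ‖g μ‖ ^ 2, by positivity, fun t => ?_⟩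
    obtain ⟨-, h2, h3⟩ := gtHat_base h M t
    simp only [pow_zero, one_mul, mul_one]
    exact ⟨h2, h3.le⟩
  | succ k ih =>
    intro g h
    obtain ⟨C0, p0, h0⟩ := ih g h
    obtain ⟨C1, p1, h1⟩ := ih _ h.derivative
    obtain ⟨C2, p2, h2⟩ := ih _ h.divSq
    refine ⟨C0 + 2 * C1 + 2 * C2, by positivity, fun t => ?_⟩
    obtain ⟨i0, b0⟩ := h0 t
    obtain ⟨i1, b1⟩ := h1 t
    obtain ⟨i2, b2⟩ := h2 t
    have key : ∀ s : ℝ, (1 + s ^ 2) ^ (k + 1) * ‖gtHat M g t s‖ ^ 2 ≤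
        (1 + s ^ 2) ^ k * ‖gtHat M g t s‖ ^ 2 + 2 * ((1 + s ^ 2) ^ k * ‖gtHat M (deriv g) t s‖ ^ 2)
        + (2 * t ^ 2) * ((1 + s ^ 2) ^ k *
          ‖gtHat M (fun x => ((x : ℂ) ^ 2)⁻¹ * g x) t s‖ ^ 2) := by
      intro s
      have e := gtHat_rec h M t s
      have e1 : |s| * ‖gtHat M g t s‖ ≤ ‖gtHat M (deriv g) t s‖ +
          |t| * ‖gtHat M (fun x => ((x : ℂ) ^ 2)⁻¹ * g x) t s‖ := by
        have := norm_add_le (gtHat M (deriv g) t s)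
          ((Complex.I * t) * gtHat M (fun x => ((x : ℂ) ^ 2)⁻¹ * g x) t s)
        rw [← e] at this
        simpa using this
      generalize ‖gtHat M (deriv g) t s‖ = a at *
      generalize ‖gtHat M (fun x => ((x : ℂ) ^ 2)⁻¹ * g x) t s‖ = b at *
      have hn : 0 ≤ ‖gtHat M g t s‖ := norm_nonneg _
      generalize ‖gtHat M g t s‖ = c at *
      have e2 : s ^ 2 * c ^ 2 ≤ 2 * a ^ 2 + 2 * t ^ 2 * b ^ 2 := by
        have := pow_le_pow_left₀ (by positivity) e1 2
        rw [mul_pow, sq_abs] at this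
        have h3 : (|t| * b) ^ 2 = t ^ 2 * b ^ 2 := by rw [mul_pow, sq_abs]
        nlinarith [sq_nonneg (a - |t| * b)]
      have hw : 0 ≤ (1 + s ^ 2) ^ k := by positivity
      have := mul_le_mul_of_nonneg_left e2 hw
      rw [pow_succ]
      linarith
    have iR := (i0.add (i1.const_mul 2)).add (i2.const_mul (2 * t ^ 2))
    have iL : Integrable (fun s : ℝ => (1 + s ^ 2) ^ (k + 1) * ‖gtHat M g t s‖ ^ 2) := by
      refine iR.mono' ?_ ?_
      · have := (gtHat_base h M t).1
        exact Continuous.aestronglyMeasurable (by fun_prop)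
      · refine Filter.Eventually.of_forall fun s => ?_
        rw [Real.norm_of_nonneg (by positivity)]
        exact key s
    refine ⟨iL, ?_⟩
    have hb := integral_mono iL iR key
    have e3 := integral_add (i0.add (i1.const_mul 2)) (i2.const_mul (2 * t ^ 2))
    have e4 := integral_add i0 (i1.const_mul 2)
    simp only [Pi.add_apply] at hb e3 e4
    rw [integral_const_mul] at e3 e4
    rw [e3, e4] at hb
    have hT : 0 ≤ (1 + t ^ 2) ^ k := by positivity
    have b2' := mul_le_mul_of_nonneg_left b2 (show 0 ≤ 2 * t ^ 2 by positivity)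
    rw [pow_succ]
    have q0 : 0 ≤ t ^ 2 * (C0 * (1 + t ^ 2) ^ k) := by positivity
    have q1 : 0 ≤ t ^ 2 * (C1 * (1 + t ^ 2) ^ k) := by positivity
    have q2 : 0 ≤ C2 * (1 + t ^ 2) ^ k := by positivity
    linarith

/-- let `g` be smooth and compactly supported in `(0,∞)`. For every
`0 ≤ β < m - 1/2` there is `C > 0`, depending on `g`, `m`, `β`, `M`, such that for all `t ∈ ℝ`,
`∫_ℝ |ĝ_t(s)| ⟨s⟩^β ds ≤ C ⟨t⟩^m`. -/
theorem weighted_fourier_bound (m : ℕ) (hm : 1 ≤ m) (M : ℝ) (g : ℝ → ℂ)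
    (hg : ContDiff ℝ (⊤ : ℕ∞) g) (hgc : HasCompactSupport g) (hgs : tsupport g ⊆ Set.Ioi 0) :
    ∀ β : ℝ, 0 ≤ β → β < (m : ℝ) - 1 / 2 →
      ∃ C > (0 : ℝ), ∀ t : ℝ,
        ∫ s : ℝ, ‖gtHat M g t s‖ * (1 + s ^ 2) ^ (β / 2) ≤ C * (1 + t ^ 2) ^ ((m : ℝ) / 2) := by
  intro β hβ hβm
  obtain ⟨C, hC, hb⟩ := weighted_L2 M m g ⟨hg, hgc, hgs⟩
  have hJ : Integrable (fun s : ℝ => (1 + s ^ 2) ^ (β - m)) := by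
    have := integrable_rpow_neg_one_add_norm_sq (E := ℝ) (μ := volume) (r := 2 * (m - β))
      (by simp; linarith)
    refine this.congr (Filter.Eventually.of_forall fun s => ?_)
    simp only [Real.norm_eq_abs, sq_abs]
    congr 1
    ring
  have hJ0 : 0 ≤ ∫ s : ℝ, (1 + s ^ 2) ^ (β - m) := integral_nonneg fun s => by positivity
  set J := ∫ s : ℝ, (1 + s ^ 2) ^ (β - m) with hJdef
  refine ⟨C + J + 1, by positivity, fun t => ?_⟩
  obtain ⟨i, b⟩ := hb t
  set L := (1 + t ^ 2) ^ ((m : ℝ) / 2) with hL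
  have hLpos : 0 < L := by positivity
  have hLsq : (1 + t ^ 2) ^ m = L * L := by
    rw [hL, ← Real.rpow_add (by positivity), add_halves, Real.rpow_natCast]
  have key : ∀ s : ℝ, ‖gtHat M g t s‖ * (1 + s ^ 2) ^ (β / 2) ≤
      L⁻¹ * ((1 + s ^ 2) ^ m * ‖gtHat M g t s‖ ^ 2) + L * (1 + s ^ 2) ^ (β - m) := by
    intro s
    have hx : 0 < 1 + s ^ 2 := by positivity
    generalize 1 + s ^ 2 = x at *
    have hn : 0 ≤ ‖gtHat M g t s‖ := norm_nonneg _
    generalize ‖gtHat M g t s‖ = c at *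
    have e1 : x ^ (β - m) * x ^ m = x ^ (β / 2) * x ^ (β / 2) := by
      rw [← Real.rpow_natCast x m, ← Real.rpow_add hx, ← Real.rpow_add hx]
      congr 1
      ring
    have hp : 0 < x ^ m := by positivity
    have hq : 0 < x ^ (β / 2) := by positivity
    have hr : 0 < x ^ (β - m) := by positivity
    generalize x ^ (β / 2) = q at *
    generalize x ^ (β - m) = r at *
    generalize x ^ m = p at *
    have h1 : (c * q) ^ 2 ≤ (L⁻¹ * (p * c ^ 2) + L * r) ^ 2 := by
      have e2 : (L⁻¹ * (p * c ^ 2)) * (L * r) = (c * q) ^ 2 := by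
        have : (L⁻¹ * (p * c ^ 2)) * (L * r) = c ^ 2 * (r * p) := by field_simp
        rw [this, e1]; ring
      nlinarith [sq_nonneg (L⁻¹ * (p * c ^ 2) - L * r), sq_nonneg (c * q)]
    exact le_of_sq_le_sq h1 (by positivity)
  have hi := integral_mono_of_nonneg (μ := volume)
    (f := fun s : ℝ => ‖gtHat M g t s‖ * (1 + s ^ 2) ^ (β / 2))
    (Filter.Eventually.of_forall fun s => by positivity)
    ((i.const_mul L⁻¹).add (hJ.const_mul L)) (Filter.Eventually.of_forall key)
  have e3 := integral_add (i.const_mul L⁻¹) (hJ.const_mul L)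
  simp only [Pi.add_apply] at hi
  rw [e3, integral_const_mul, integral_const_mul] at hi
  refine hi.trans ?_
  have h5 : L⁻¹ * ∫ s : ℝ, (1 + s ^ 2) ^ m * ‖gtHat M g t s‖ ^ 2 ≤ C * L := by
    rw [hLsq] at b
    calc _ ≤ L⁻¹ * (C * (L * L)) := mul_le_mul_of_nonneg_left b (by positivity)
      _ = C * L := by field_simp
  rw [← hJdef]
  linarith
end
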